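/- Let E ⊆ ℝ² be compact, ε > 0, and let x ∈ ∂E_ε be either a wedge or a point of Unp(E). Then there exists exactly one connected component V of the complement E_ε^c with x ∈ ∂V. -/

import Mathlib

open Metric Set Filter Topology RealInnerProductSpace

noncomputable section

/-- The Euclidean plane. -/
abbrev Plane := EuclideanSpace ℝ (Fin 2)

/-- The closed ε-neighbourhood of a set `E ⊆ ℝ²`: the closure of the union of open
ε-balls centred at points of `E`. -/
def eNbhd (E : Set Plane) (ε : ℝ) : Set Plane :=
  closure (⋃ y ∈ E, ball y ε)

/-- The set of contributors of a boundary point `x ∈ ∂E_ε`: points `y ∈ ∂E` with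
`‖y - x‖ = ε`. -/
def contributors (E : Set Plane) (ε : ℝ) (x : Plane) : Set Plane :=
  {y ∈ frontier E | ‖y - x‖ = ε}

/-- The set of outward directions from `E_ε` at `x`. -/
def outwardDirs (E : Set Plane) (ε : ℝ) (x : Plane) : Set Plane :=
  {ξ | ‖ξ‖ = 1 ∧ ∃ u : ℕ → Plane, (∀ n, u n ∉ eNbhd E ε) ∧
    Tendsto u atTop (nhds x) ∧
    Tendsto (fun n => (‖u n - x‖)⁻¹ • (u n - x)) atTop (nhds ξ)}

/-- The set of extremal outward directions at `x`: outward directions perpendicular to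
`y - x` for some contributor `y`. -/
def extOutward (E : Set Plane) (ε : ℝ) (x : Plane) : Set Plane :=
  {ξ ∈ outwardDirs E ε x | ∃ y ∈ contributors E ε x, ⟪y - x, ξ⟫ = 0}

/-- The set of extremal contributors at `x`: contributors perpendicular to some
outward direction. -/
def extContrib (E : Set Plane) (ε : ℝ) (x : Plane) : Set Plane :=
  {y ∈ contributors E ε x | ∃ ξ ∈ outwardDirs E ε x, ⟪y - x, ξ⟫ = 0}

/-- The set of extremal pairs at `x`. -/
def extPairs (E : Set Plane) (ε : ℝ) (x : Plane) : Set (Plane × Plane) :=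
  {p | p.1 ∈ outwardDirs E ε x ∧ p.2 ∈ contributors E ε x ∧ ⟪p.2 - x, p.1⟫ = 0}

/-- The set `Unp(E)` of boundary points of `E_ε` with a unique contributor. -/
def unp (E : Set Plane) (ε : ℝ) : Set Plane :=
  {x ∈ frontier (eNbhd E ε) | ∃ y, contributors E ε x = {y}}

/-- A boundary point `x ∈ ∂E_ε` is smooth if `x ∈ Unp(E)` and a whole neighbourhood of
`x` on the boundary consists of points of `Unp(E)`. -/
def IsSmoothPt (E : Set Plane) (ε : ℝ) (x : Plane) : Prop :=
  x ∈ unp E ε ∧ ∃ r > 0, frontier (eNbhd E ε) ∩ ball x r ⊆ unp E ε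

/-- A singularity: a non-smooth boundary point of `E_ε`. -/
def IsSingularity (E : Set Plane) (ε : ℝ) (x : Plane) : Prop :=
  x ∈ frontier (eNbhd E ε) ∧ ¬ IsSmoothPt E ε x

/-- The open half-ball of radius `r` at `x` in direction `v`. -/
def halfBall (x v : Plane) (r : ℝ) : Set Plane :=
  {z ∈ ball x r | 0 < ⟪z - x, v⟫}

/-- `V` is a connected component of the complement of `E_ε`. -/
def IsCompOfCompl (E : Set Plane) (ε : ℝ) (V : Set Plane) : Prop :=
  ∃ z, z ∉ eNbhd E ε ∧ V = connectedComponentIn (eNbhd E ε)ᶜ z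

/-- The closed geodesic arc-segment between `v, w ∈ S¹`. -/
def arcSeg (v w : Plane) : Set Plane :=
  {u | ‖u‖ = 1 ∧ ∃ a b : ℝ, 0 ≤ a ∧ 0 ≤ b ∧ u = a • v + b • w}

/-- The open geodesic arc-segment between `v, w ∈ S¹`. -/
def openArc (v w : Plane) : Set Plane :=
  arcSeg v w \ {v, w}

/-- A chain sequence for `x`: a sequence of singularities converging to `x` whose
extremal contributors become increasingly opposed. -/
def IsChainSeq (E : Set Plane) (ε : ℝ) (x : Plane) (u : ℕ → Plane) : Prop :=
  (∀ n, IsSingularity E ε (u n)) ∧ (∀ n, u n ≠ x) ∧ Tendsto u atTop (nhds x) ∧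
  ∃ y1 y2 : ℕ → Plane, (∀ n, extContrib E ε (u n) = {y1 n, y2 n}) ∧
    Tendsto (fun n => ⟪ε⁻¹ • (y1 n - u n), ε⁻¹ • (y2 n - u n)⟫) atTop (nhds (-1))

/-- Type S1: wedge. -/
def IsWedge (E : Set Plane) (ε : ℝ) (x : Plane) : Prop :=
  IsSingularity E ε x ∧
  ∃ ξ₁ ξ₂, extOutward E ε x = {ξ₁, ξ₂} ∧ ξ₁ ≠ ξ₂ ∧ ξ₁ ≠ -ξ₂

/-- Type S2: one-sided sharp singularity. -/
def IsSharp (E : Set Plane) (ε : ℝ) (x : Plane) : Prop :=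
  IsSingularity E ε x ∧ (∃ ξ, extOutward E ε x = {ξ}) ∧
  ∃ δ > 0, IsConnected (ball x δ ∩ (eNbhd E ε)ᶜ)

/-- Type S3: sharp-sharp singularity. -/
def IsSharpSharp (E : Set Plane) (ε : ℝ) (x : Plane) : Prop :=
  IsSingularity E ε x ∧ ∃ ξ, extOutward E ε x = {ξ, -ξ} ∧
    ∀ η ∈ ({ξ, -ξ} : Set Plane), ∃ δ > 0, IsConnected (halfBall x η δ ∩ (eNbhd E ε)ᶜ)

/-- Type S4: one-sided shallow singularity. -/
def IsShallow (E : Set Plane) (ε : ℝ) (x : Plane) : Prop :=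
  IsSingularity E ε x ∧ x ∈ unp E ε ∧
  ∃ ξ₁ ξ₂, extOutward E ε x = {ξ₁, ξ₂} ∧
    (∃ δ > 0, halfBall x ξ₁ δ ∩ frontier (eNbhd E ε) ⊆ unp E ε) ∧
    (∀ δ > 0, ¬ (halfBall x ξ₂ δ ∩ frontier (eNbhd E ε) ⊆ unp E ε))

/-- Type S5: shallow-shallow singularity. -/
def IsShallowShallow (E : Set Plane) (ε : ℝ) (x : Plane) : Prop :=
  IsSingularity E ε x ∧ x ∈ unp E ε ∧
  ∃ ξ₁ ξ₂, extOutward E ε x = {ξ₁, ξ₂} ∧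
    ∀ η ∈ ({ξ₁, ξ₂} : Set Plane), ∀ δ > 0,
      ¬ (halfBall x η δ ∩ frontier (eNbhd E ε) ⊆ unp E ε)

/-- Type S6: one-sided chain singularity. -/
def IsChainSing (E : Set Plane) (ε : ℝ) (x : Plane) : Prop :=
  IsSingularity E ε x ∧ (∃ ξ, extOutward E ε x = {ξ}) ∧
  ∃ u, IsChainSeq E ε x u

/-- Type S7: chain-chain singularity. -/
def IsChainChain (E : Set Plane) (ε : ℝ) (x : Plane) : Prop :=
  IsSingularity E ε x ∧ ∃ ξ, extOutward E ε x = {ξ, -ξ} ∧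
    ∀ η ∈ ({ξ, -ξ} : Set Plane), ∃ δ > 0, ∃ u,
      IsChainSeq E ε x u ∧ ∀ n, u n ∈ halfBall x η δ

/-- Type S8: sharp-chain singularity. -/
def IsSharpChain (E : Set Plane) (ε : ℝ) (x : Plane) : Prop :=
  IsSingularity E ε x ∧ ∃ ξ, extOutward E ε x = {ξ, -ξ} ∧
    (∃ δ > 0, IsConnected (halfBall x ξ δ ∩ (eNbhd E ε)ᶜ)) ∧
    (∃ δ > 0, ∃ u, IsChainSeq E ε x u ∧ ∀ n, u n ∈ halfBall x (-ξ) δ)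

/-!
Suppose all contributors `y` of `x` satisfy `⟪w, y - x⟫ < 0`. By compactness there is a margin
`m > 0` such that every `y ∈ closure E` is either at distance at least `ε + m` from `x` or
satisfies `⟪w, y - x⟫ ≤ -m`. Translating a point `p` close to `x` by a short positive multiple of
`w` increases its distance to the points of the second kind and keeps it far from those of the
first kind. So every point of the complement near `x` can be pushed along a fixed `v = T • w`
without leaving the complement, and lands in the component of `x + v`; hence only one component
accumulates at `x`.

At a point of `Unp(E)` take `w = x - y` for the only contributor `y`. At a wedge take
`w = ξ₁ + ξ₂`: outward directions make nonpositive inner products with `y - x`, and in the plane a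
nonzero vector cannot be orthogonal to both `ξ₁` and `ξ₂`.
-/

theorem existsUnique_connectedComponentIn_mem_frontier {X : Type*} [TopologicalSpace X]
    {U C : Set X} {x : X} (hx : x ∈ frontier U) (hxU : x ∉ U)
    (hC : ∀ᶠ p in 𝓝[U] x, connectedComponentIn U p = C) :
    ∃! V, (∃ z ∈ U, V = connectedComponentIn U z) ∧ x ∈ frontier V := by
  have frontier_of_closure {V : Set X} (hVU : V ⊆ U) (hV : x ∈ closure V) : x ∈ frontier V :=
    ⟨hV, fun h => hxU (hVU (interior_subset h))⟩
  have : (𝓝[U] x).NeBot := mem_closure_iff_nhdsWithin_neBot.1 hx.1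
  obtain ⟨q, rfl, hqU⟩ := (hC.and self_mem_nhdsWithin).exists
  refine ⟨_, ⟨⟨q, hqU, rfl⟩, frontier_of_closure (connectedComponentIn_subset U q) ?_⟩, ?_⟩
  · refine mem_closure_of_tendsto (tendsto_id.mono_left (nhdsWithin_le_nhds (s := U))) ?_
    filter_upwards [hC, self_mem_nhdsWithin] with p hp hpU
    exact hp ▸ mem_connectedComponentIn hpU
  · rintro _ ⟨⟨z, -, rfl⟩, hz⟩
    have hzU := connectedComponentIn_subset U z
    have : (𝓝[connectedComponentIn U z] x).NeBot := mem_closure_iff_nhdsWithin_neBot.1 hz.1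
    obtain ⟨p, hpq, hpz⟩ := ((hC.filter_mono (nhdsWithin_mono x hzU)).and
      self_mem_nhdsWithin).exists
    exact (connectedComponentIn_eq hpz).trans hpq

theorem eventually_connectedComponentIn_eq_of_segment_subset {F : Type*} [AddCommGroup F]
    [Module ℝ F] [TopologicalSpace F] [ContinuousAdd F] [ContinuousSMul ℝ F]
    [LocallyConnectedSpace F] {U : Set F} {x v : F} (hU : IsOpen U) (hxv : x + v ∈ U)
    (hseg : ∀ᶠ p in 𝓝[U] x, segment ℝ p (p + v) ⊆ U) :
    ∀ᶠ p in 𝓝[U] x, connectedComponentIn U p = connectedComponentIn U (x + v) := by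
  have translate_mem : ∀ᶠ p in 𝓝 x, p + v ∈ connectedComponentIn U (x + v) :=
    (continuous_add_const v).continuousAt.eventually_mem
      (hU.connectedComponentIn.mem_nhds (mem_connectedComponentIn hxv))
  filter_upwards [hseg, translate_mem.filter_mono nhdsWithin_le_nhds] with p hp hpv
  have hpp : p + v ∈ connectedComponentIn U p :=
    (convex_segment p (p + v)).isPreconnected.subset_connectedComponentIn
      (left_mem_segment ℝ _ _) hp (right_mem_segment ℝ _ _)
  exact (connectedComponentIn_eq hpp).trans (connectedComponentIn_eq hpv).symm

theorem notMem_cthickening_iff_forall_lt_dist {X : Type*} [PseudoMetricSpace X] [ProperSpace X]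
    {E : Set X} {ε : ℝ} {z : X} (hε : 0 ≤ ε) :
    z ∉ cthickening ε E ↔ ∀ y ∈ closure E, ε < dist z y := by
  simp [cthickening_eq_biUnion_closedBall E hε]

theorem le_dist_of_mem_frontier_cthickening {X : Type*} [PseudoMetricSpace X] {E : Set X} {ε : ℝ}
    {x y : X} (hx : x ∈ frontier (cthickening ε E)) (hy : y ∈ closure E) : ε ≤ dist x y := by
  rw [← ENNReal.ofReal_le_ofReal_iff dist_nonneg, ← edist_dist,
    ← frontier_cthickening_subset E hx, ← infEDist_closure]
  exact infEDist_le_edist_of_mem hy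

section InnerProductSpace

variable {F : Type*} [NormedAddCommGroup F] [InnerProductSpace ℝ F] {E : Set F} {ε : ℝ}
  {x w : F}

theorem norm_lt_norm_add_of_inner_pos {u v : F} (h : 0 < ⟪u, v⟫) : ‖u‖ < ‖u + v‖ := by
  refine lt_of_pow_lt_pow_left₀ 2 (norm_nonneg _) ?_
  rw [norm_add_sq_real]
  linarith [sq_nonneg ‖v‖]

theorem exists_pos_forall_le_dist_or_le_inner [ProperSpace F] (hE : IsClosed E)
    (hx : ∀ y ∈ E, ε ≤ dist x y) (hw : ∀ y ∈ E, dist x y = ε → ⟪w, y - x⟫ < 0) :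
    ∃ m > 0, ∀ y ∈ E, ε + m ≤ dist x y ∨ m ≤ ⟪w, x - y⟫ := by
  have hcompact : IsCompact (E ∩ closedBall x (ε + 1)) :=
    (isCompact_closedBall x (ε + 1)).inter_left hE
  have hpos : ∀ y ∈ E ∩ closedBall x (ε + 1), 0 < max (dist x y - ε) ⟪w, x - y⟫ := by
    rintro y ⟨hy, -⟩
    rcases (hx y hy).eq_or_lt with heq | hlt
    · rw [← neg_sub y x, inner_neg_right]
      exact lt_max_of_lt_right (neg_pos.2 (hw y hy heq.symm))
    · exact lt_max_of_lt_left (sub_pos.2 hlt)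
  obtain ⟨m, hm, hle⟩ := hcompact.exists_forall_le' (by fun_prop) hpos
  refine ⟨min m 1, lt_min hm one_pos, fun y hy => ?_⟩
  by_cases hyx : dist x y ≤ ε + 1
  · rcases le_max_iff.1 (hle y ⟨hy, mem_closedBall'.2 hyx⟩) with h | h
    · exact Or.inl (by linarith [min_le_left m 1])
    · exact Or.inr ((min_le_left m 1).trans h)
  · exact Or.inl (by linarith [min_le_right m 1])

theorem exists_pos_eventually_forall_lt_dist_add_smul {m : ℝ} (hm : 0 < m)
    (hE : ∀ y ∈ E, ε + m ≤ dist x y ∨ m ≤ ⟪w, x - y⟫) :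
    ∃ T > (0 : ℝ), ∀ᶠ p in 𝓝 x, ∀ t ∈ Ioc 0 T, ∀ y ∈ E, ε ≤ dist p y → ε < dist (p + t • w) y := by
  obtain ⟨T, hT, hwT⟩ := exists_pos_mul_lt hm ‖w‖
  refine ⟨T, hT, ?_⟩
  have hnear : ∀ᶠ p in 𝓝 x, dist x p + ‖w‖ * T < m :=
    ContinuousAt.eventually_lt (by fun_prop) (by fun_prop) (by simpa using hwT)
  have hinner : ∀ᶠ p in 𝓝 x, -m < ⟪w, p - x⟫ :=
    ContinuousAt.eventually_lt (by fun_prop) (by fun_prop) (by simpa using hm)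
  filter_upwards [hnear, hinner] with p hpx hpw t ⟨ht, htT⟩ y hy hpy
  rcases hE y hy with hfar | hside
  · have hstep : dist p (p + t • w) ≤ ‖w‖ * T := by
      rw [dist_self_add_right, norm_smul, Real.norm_of_nonneg ht.le, mul_comm]
      gcongr
    linarith [dist_triangle4 x p (p + t • w) y]
  · have hpos : 0 < ⟪w, p - y⟫ := by
      rw [← sub_add_sub_cancel p x y, inner_add_right]
      linarith
    refine hpy.trans_lt ?_
    rw [dist_eq_norm, dist_eq_norm, add_sub_right_comm]
    apply norm_lt_norm_add_of_inner_pos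
    rw [inner_smul_right, real_inner_comm]
    exact mul_pos ht hpos

theorem exists_eventually_segment_add_subset_compl_cthickening [ProperSpace F] (hε : 0 ≤ ε)
    (hx : x ∈ frontier (cthickening ε E))
    (hw : ∀ y ∈ closure E, dist x y = ε → ⟪w, y - x⟫ < 0) :
    ∃ v, x + v ∈ (cthickening ε E)ᶜ ∧
      ∀ᶠ p in 𝓝[(cthickening ε E)ᶜ] x, segment ℝ p (p + v) ⊆ (cthickening ε E)ᶜ := by
  have hxE := fun y => le_dist_of_mem_frontier_cthickening (y := y) hx
  obtain ⟨m, hm, hgap⟩ := exists_pos_forall_le_dist_or_le_inner isClosed_closure hxE hw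
  obtain ⟨T, hT, hpush⟩ := exists_pos_eventually_forall_lt_dist_add_smul hm hgap
  refine ⟨T • w, (notMem_cthickening_iff_forall_lt_dist hε).2 fun y hy =>
    hpush.self_of_nhds T ⟨hT, le_rfl⟩ y hy (hxE y hy), ?_⟩
  filter_upwards [self_mem_nhdsWithin, hpush.filter_mono nhdsWithin_le_nhds] with p hpU hp
  rw [segment_eq_image']
  rintro _ ⟨θ, ⟨hθ0, hθ1⟩, rfl⟩
  rcases hθ0.eq_or_lt with rfl | hθ
  · simpa using hpU
  · simp only [add_sub_cancel_left, smul_smul]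
    exact (notMem_cthickening_iff_forall_lt_dist hε).2 fun y hy =>
      hp _ ⟨mul_pos hθ hT, mul_le_of_le_one_left hT.le hθ1⟩ y hy
        ((notMem_cthickening_iff_forall_lt_dist hε).1 hpU y hy).le

/-- At a point of `∂E_ε`, the points of `closure E` at distance `ε` are exactly its contributors, so
`hw` says that the contributors lie in an open half-space. It holds at wedges by
`IsWedge.exists_inner_neg` and at points of `Unp(E)` by `exists_inner_neg_of_mem_unp`. -/
theorem unique_connected_component_general [ProperSpace F] (hε : 0 ≤ ε)
    (hx : x ∈ frontier (cthickening ε E))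
    (hw : ∀ y ∈ closure E, dist x y = ε → ⟪w, y - x⟫ < 0) :
    ∃! V, (∃ z ∈ (cthickening ε E)ᶜ, V = connectedComponentIn (cthickening ε E)ᶜ z) ∧
      x ∈ frontier V := by
  obtain ⟨v, hxv, hseg⟩ := exists_eventually_segment_add_subset_compl_cthickening hε hx hw
  have hxU : x ∉ (cthickening ε E)ᶜ := not_not_intro (isClosed_cthickening.frontier_subset hx)
  rw [← frontier_compl] at hx
  exact existsUnique_connectedComponentIn_mem_frontier hx hxU
    (eventually_connectedComponentIn_eq_of_segment_subset isClosed_cthickening.isOpen_compl hxv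
      hseg)

theorem inner_nonpos_of_tendsto_direction {ι : Type*} {l : Filter ι} [l.NeBot] {u : ι → F}
    {y ξ : F} (hu : ∀ n, dist x y ≤ dist (u n) y) (hux : Tendsto u l (𝓝 x))
    (hξ : Tendsto (fun n => ‖u n - x‖⁻¹ • (u n - x)) l (𝓝 ξ)) : ⟪y - x, ξ⟫ ≤ 0 := by
  have hhalf : Tendsto (fun n => ‖u n - x‖ / 2) l (𝓝 0) := by
    simpa using ((hux.sub_const x).norm).div_const 2
  refine le_of_tendsto_of_tendsto' (tendsto_const_nhds.inner hξ) hhalf fun n => ?_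
  have hsq : ‖y - x‖ ^ 2 ≤ ‖u n - x‖ ^ 2 - 2 * ⟪y - x, u n - x⟫ + ‖y - x‖ ^ 2 := by
    rw [real_inner_comm, ← norm_sub_sq_real, sub_sub_sub_cancel_right, ← dist_eq_norm,
      ← dist_eq_norm, dist_comm y x]
    gcongr
    exact hu n
  rw [inner_smul_right]
  rcases (norm_nonneg (u n - x)).eq_or_lt with hzero | hpos
  · simp [← hzero]
  · rw [inv_mul_le_iff₀ hpos]
    linarith

theorem eq_zero_of_forall_inner_eq_zero {ι : Type*} [Fintype ι] [Nonempty ι] {b : ι → F}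
    (hb : LinearIndependent ℝ b) (hcard : Fintype.card ι = Module.finrank ℝ F) {v : F}
    (hv : ∀ i, ⟪v, b i⟫ = 0) : v = 0 := by
  have hspan : Submodule.span ℝ (range b) ≤ (ℝ ∙ v)ᗮ := Submodule.span_le.2 <|
    range_subset_iff.2 fun i => Submodule.mem_orthogonal_singleton_iff_inner_right.2 (hv i)
  rw [hb.span_eq_top_of_card_eq_finrank hcard] at hspan
  exact inner_self_eq_zero.1
    (Submodule.mem_orthogonal_singleton_iff_inner_right.1 (hspan (Submodule.mem_top (x := v))))

end InnerProductSpace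

theorem linearIndependent_pair_of_norm_eq {F : Type*} [NormedAddCommGroup F] [NormedSpace ℝ F]
    {u v : F} (h : ‖u‖ = ‖v‖) (hne : u ≠ v) (hne' : u ≠ -v) : LinearIndependent ℝ ![u, v] := by
  by_contra hdep
  rcases sameRay_or_sameRay_neg_iff_not_linearIndependent.2 hdep with hray | hray
  · exact hne ((sameRay_iff_of_norm_eq h).1 hray)
  · exact hne' ((sameRay_iff_of_norm_eq (h.trans (norm_neg v).symm)).1 hray)

theorem mem_frontier_of_disjoint_ball {F : Type*} [SeminormedAddCommGroup F] [NormedSpace ℝ F]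
    {E : Set F} {ε : ℝ} {x y : F} (hε : ε ≠ 0) (hE : Disjoint (interior E) (ball x ε))
    (hy : y ∈ closure E) (hyx : dist y x ≤ ε) : y ∈ frontier E := by
  refine ⟨hy, fun hint => disjoint_left.1 (hE.closure_right isOpen_interior) hint ?_⟩
  rwa [closure_ball x hε]

section Plane

variable {E : Set Plane} {ε : ℝ} {x y ξ : Plane}

theorem eNbhd_eq_cthickening (hε : 0 < ε) : eNbhd E ε = cthickening ε E := by
  rw [← closure_thickening hε, thickening_eq_biUnion_ball, eNbhd]

theorem mem_contributors_of_dist_eq (hε : 0 < ε) (hx : x ∈ frontier (eNbhd E ε))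
    (hy : y ∈ closure E) (hxy : dist x y = ε) : y ∈ contributors E ε x := by
  rw [eNbhd_eq_cthickening hε] at hx
  have hdisj : Disjoint (interior E) (ball x ε) := disjoint_left.2 fun z hz hzx =>
    (le_dist_of_mem_frontier_cthickening hx (subset_closure (interior_subset hz))).not_gt
      (mem_ball'.1 hzx)
  rw [dist_comm] at hxy
  exact ⟨mem_frontier_of_disjoint_ball hε.ne' hdisj hy hxy.le, by rwa [← dist_eq_norm]⟩

theorem inner_nonpos_of_mem_outwardDirs (hε : 0 < ε) (hξ : ξ ∈ outwardDirs E ε x)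
    (hy : y ∈ closure E) (hxy : dist x y = ε) : ⟪y - x, ξ⟫ ≤ 0 := by
  obtain ⟨-, u, hu, hux, hdir⟩ := hξ
  simp only [eNbhd_eq_cthickening hε, notMem_cthickening_iff_forall_lt_dist hε.le] at hu
  exact inner_nonpos_of_tendsto_direction (fun n => hxy.trans_le (hu n y hy).le) hux hdir

theorem exists_inner_neg_of_mem_unp (hε : 0 < ε) (hx : x ∈ unp E ε) :
    ∃ w, ∀ y ∈ closure E, dist x y = ε → ⟪w, y - x⟫ < 0 := by
  obtain ⟨hxf, y₀, hy₀⟩ := hx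
  refine ⟨x - y₀, fun y hy hxy => ?_⟩
  obtain rfl : y = y₀ := by simpa [hy₀] using mem_contributors_of_dist_eq hε hxf hy hxy
  have hne : x - y ≠ 0 := sub_ne_zero.2 (dist_pos.1 (hxy ▸ hε))
  rw [← neg_sub x y, inner_neg_right]
  exact neg_neg_of_pos (real_inner_self_pos.2 hne)

theorem exists_inner_neg_of_outwardDirs {ξ₁ ξ₂ : Plane} (hε : 0 < ε)
    (h₁ : ξ₁ ∈ outwardDirs E ε x) (h₂ : ξ₂ ∈ outwardDirs E ε x) (hne : ξ₁ ≠ ξ₂)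
    (hne' : ξ₁ ≠ -ξ₂) : ∃ w, ∀ y ∈ closure E, dist x y = ε → ⟪w, y - x⟫ < 0 := by
  refine ⟨ξ₁ + ξ₂, fun y hy hxy => ?_⟩
  have hindep := linearIndependent_pair_of_norm_eq (h₁.1.trans h₂.1.symm) hne hne'
  have hyx : y - x ≠ 0 := sub_ne_zero.2 (dist_pos.1 (hxy ▸ hε)).symm
  have hle₁ := inner_nonpos_of_mem_outwardDirs hε h₁ hy hxy
  have hle₂ := inner_nonpos_of_mem_outwardDirs hε h₂ hy hxy
  rw [real_inner_comm, inner_add_right]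
  refine (add_nonpos hle₁ hle₂).lt_of_ne fun hsum => hyx ?_
  exact eq_zero_of_forall_inner_eq_zero hindep (by simp)
    (Fin.forall_fin_two.2 ⟨show ⟪y - x, ξ₁⟫ = 0 by linarith, show ⟪y - x, ξ₂⟫ = 0 by linarith⟩)

theorem IsWedge.exists_inner_neg (hε : 0 < ε) (hx : IsWedge E ε x) :
    ∃ w, ∀ y ∈ closure E, dist x y = ε → ⟪w, y - x⟫ < 0 := by
  obtain ⟨-, ξ₁, ξ₂, hext, hne, hne'⟩ := hx
  have hout : ∀ ξ ∈ ({ξ₁, ξ₂} : Set Plane), ξ ∈ outwardDirs E ε x := fun ξ hξ =>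
    (hext.symm ▸ hξ : ξ ∈ extOutward E ε x).1
  exact exists_inner_neg_of_outwardDirs hε (hout ξ₁ (by simp)) (hout ξ₂ (by simp)) hne hne'

end Plane

/-- Unique connected component: a wedge or a point of `Unp(E)` lies on the boundary of
exactly one connected component of the complement of `E_ε`. -/
theorem unique_connected_component (E : Set Plane) (hE : IsCompact E) {ε : ℝ}
    (hε : 0 < ε) (x : Plane) (hx : IsWedge E ε x ∨ x ∈ unp E ε) :
    ∃! V, IsCompOfCompl E ε V ∧ x ∈ frontier V := by
  obtain ⟨w, hw⟩ := hx.elim (·.exists_inner_neg hε) (exists_inner_neg_of_mem_unp hε)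
  have hxf : x ∈ frontier (eNbhd E ε) := hx.elim (·.1.1) (·.1)
  simp only [IsCompOfCompl, eNbhd_eq_cthickening hε] at hxf ⊢
  exact unique_connected_component_general hε.le hxf hw

end
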